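/- Let ξ be a state on ℓ^∞ invariant under the unit shift T_1 and invariant under the dilation D_j for every j ∈ ℕ. Then for every a > 0: ξ({f(k)}_{k≥1}) = ξ({∫_{k−1}^{k} f(t+a) dt}_{k≥1}) and ξ({f(k)}_{k≥1}) = ξ({∫_{k−1}^{k} f(t/a) dt}_{k≥1}). -/

import Mathlib

open Filter

/-- A bounded real sequence (an element of `ℓ^∞`). -/
def IsBddSeq (a : ℕ → ℝ) : Prop := ∃ C, ∀ k, |a k| ≤ C

/-- A state on `ℓ^∞`: a positive linear functional with `ξ(1) = 1`
(linearity and positivity are required on bounded sequences). -/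
def IsLinfState (ξ : (ℕ → ℝ) → ℝ) : Prop :=
  (∀ a b : ℕ → ℝ, IsBddSeq a → IsBddSeq b → ξ (a + b) = ξ a + ξ b) ∧
  (∀ (c : ℝ) (a : ℕ → ℝ), IsBddSeq a → ξ (c • a) = c * ξ a) ∧
  (∀ a : ℕ → ℝ, IsBddSeq a → (∀ k, 0 ≤ a k) → 0 ≤ ξ a) ∧
  ξ (fun _ => 1) = 1

/-- A generalised limit: a state on `ℓ^∞` with
`liminf a ≤ ξ a ≤ limsup a` for every bounded nonnegative sequence. -/
def IsGenLim (ξ : (ℕ → ℝ) → ℝ) : Prop :=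
  IsLinfState ξ ∧
  ∀ a : ℕ → ℝ, IsBddSeq a → (∀ k, 0 ≤ a k) →
    liminf a atTop ≤ ξ a ∧ ξ a ≤ limsup a atTop

/-- Invariance under the unit shift `T_1`. -/
def ShiftInv (ξ : (ℕ → ℝ) → ℝ) : Prop :=
  ∀ a : ℕ → ℝ, IsBddSeq a → ξ (fun k => a (k + 1)) = ξ a

/-- Invariance under the dilations `D_j`, `D_j(a)_k = a_{⌈k/j⌉}`
(`⌈k/j⌉ = (k + j - 1)/j` in natural division). -/
def DilInv (ξ : (ℕ → ℝ) → ℝ) : Prop :=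
  ∀ j : ℕ, 0 < j → ∀ a : ℕ → ℝ, IsBddSeq a →
    ξ (fun k => a ((k + j - 1) / j)) = ξ a


theorem bdd_of_shift {x : ℕ → ℝ} {C : ℝ} (h : ∀ k, |x (k + 1)| ≤ C) : IsBddSeq x := by
  refine ⟨max C |x 0|, fun k => ?_⟩
  cases k with
  | zero => exact le_max_right _ _
  | succ n => exact (h n).trans (le_max_left _ _)

theorem bdd_comp {x : ℕ → ℝ} (h : IsBddSeq x) (φ : ℕ → ℕ) : IsBddSeq (fun k => x (φ k)) := by
  obtain ⟨C, hC⟩ := h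
  exact ⟨C, fun k => hC _⟩

theorem shift_n {ξ : (ℕ → ℝ) → ℝ} (hT : ShiftInv ξ) {x : ℕ → ℝ} (hx : IsBddSeq x) (n : ℕ) :
    ξ (fun k => x (k + n)) = ξ x := by
  induction n with
  | zero => rfl
  | succ n ih =>
    rw [← ih, ← hT _ (bdd_comp hx (fun k => k + n))]
    congr 1
    funext k
    congr 1
    ring

theorem state_mono {ξ : (ℕ → ℝ) → ℝ} (hst : IsLinfState ξ) {x y : ℕ → ℝ} (hx : IsBddSeq x)
    (hy : IsBddSeq y) (ε : ℝ) (h : ∀ k, x k ≤ y k + ε) : ξ x ≤ ξ y + ε := by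
  obtain ⟨hadd, hsm, hpos, hone⟩ := hst
  have h1 : IsBddSeq (fun _ => (1 : ℝ)) := ⟨1, fun k => by simp⟩
  have hε : IsBddSeq (ε • (fun _ => (1 : ℝ)) : ℕ → ℝ) := ⟨|ε|, fun k => by simp⟩
  have hnx : IsBddSeq ((-1 : ℝ) • x) := by
    obtain ⟨C, hC⟩ := hx
    exact ⟨C, fun k => by simpa using hC k⟩
  have hs : IsBddSeq (y + ε • (fun _ => (1 : ℝ))) := by
    obtain ⟨C, hC⟩ := hy
    obtain ⟨D, hDD⟩ := hε
    exact ⟨C + D, fun k => (abs_add_le _ _).trans (add_le_add (hC k) (hDD k))⟩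
  have hs2 : IsBddSeq ((y + ε • (fun _ => (1 : ℝ))) + (-1 : ℝ) • x) := by
    obtain ⟨C, hC⟩ := hs
    obtain ⟨D, hDD⟩ := hnx
    exact ⟨C + D, fun k => (abs_add_le _ _).trans (add_le_add (hC k) (hDD k))⟩
  have := hpos _ hs2 (fun k => by
    have := h k
    simp
    linarith)
  rw [hadd _ _ hs hnx, hadd _ _ hy hε, hsm _ _ h1, hsm _ _ hx, hone] at this
  linarith

theorem state_le {ξ : (ℕ → ℝ) → ℝ} (hst : IsLinfState ξ) (hT : ShiftInv ξ) {x y e : ℕ → ℝ}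
    (hx : IsBddSeq x) (hy : IsBddSeq y) {c : ℝ} (he : Tendsto e atTop (nhds c))
    (h : ∀ᶠ k in atTop, x k ≤ y k + e k) : ξ x ≤ ξ y + c := by
  refine le_of_forall_pos_le_add fun ε hε => ?_
  have h2 : ∀ᶠ k in atTop, e k < c + ε := he.eventually_lt_const (by linarith)
  obtain ⟨N, hN⟩ := eventually_atTop.1 (h.and h2)
  rw [← shift_n hT hx N, ← shift_n hT hy N, add_assoc]
  refine state_mono hst (bdd_comp hx _) (bdd_comp hy _) _ fun k => ?_
  have := hN (k + N) (by omega)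
  linarith [this.1, this.2]

/-- The class of functions considered. -/
def GoodFn (C : ℝ) (f : ℝ → ℝ) : Prop :=
  (∀ t ≥ (0 : ℝ), |f t| ≤ C) ∧ ∀ s t : ℝ, 0 < s → s ≤ t → s * f s ≤ t * f t

theorem GoodFn.nonneg {C : ℝ} {f : ℝ → ℝ} (h : GoodFn C f) : 0 ≤ C :=
  (abs_nonneg _).trans (h.1 0 le_rfl)

theorem GoodFn.scale {C : ℝ} {f : ℝ → ℝ} (h : GoodFn C f) {c : ℝ} (hc : 0 < c) :
    GoodFn C (fun t => f (c * t)) := by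
  refine ⟨fun t ht => h.1 _ (mul_nonneg hc.le ht), fun s t hs hst => ?_⟩
  have := h.2 (c * s) (c * t) (by positivity) (by gcongr)
  rw [mul_assoc, mul_assoc] at this
  exact le_of_mul_le_mul_left this hc

theorem GoodFn.bound {C : ℝ} {f : ℝ → ℝ} (h : GoodFn C f) {s t u d : ℝ} (hu : 0 < u) (hus : u ≤ s)
    (hst : s ≤ t) (hd : t - s ≤ d) : f s ≤ f t + C * d / u := by
  have hs : 0 < s := hu.trans_le hus
  have h1 := h.2 s t hs hst
  have hC := h.nonneg
  have h2 : f t ≤ C := (le_abs_self _).trans (h.1 t (hs.le.trans hst))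
  have h3 : f s ≤ f t + C * (t - s) / s := by
    rw [← sub_le_iff_le_add', le_div_iff₀ hs]
    nlinarith
  have h4 : C * (t - s) / s ≤ C * d / u := by
    have : 0 ≤ t - s := by linarith
    have : 0 ≤ d := by linarith
    gcongr
  linarith

theorem GoodFn.bdd {C : ℝ} {f : ℝ → ℝ} (h : GoodFn C f) {c : ℝ} (hc : 0 ≤ c) :
    IsBddSeq (fun k => f (c * (k : ℝ))) := ⟨C, fun k => h.1 _ (by positivity)⟩

theorem GoodFn.bdd' {C : ℝ} {f : ℝ → ℝ} (h : GoodFn C f) :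
    IsBddSeq (fun k => f (k : ℝ)) := ⟨C, fun k => h.1 _ (by positivity)⟩

theorem tendsto_err (A b c : ℝ) (hc : 0 < c) :
    Tendsto (fun k : ℕ => A / (c * (k : ℝ) - b)) atTop (nhds 0) := by
  apply Tendsto.div_atTop tendsto_const_nhds
  apply tendsto_atTop_add_const_right
  exact tendsto_natCast_atTop_atTop.const_mul_atTop hc

theorem average {ξ : (ℕ → ℝ) → ℝ} (hst : IsLinfState ξ) (hT : ShiftInv ξ) {C : ℝ} {f : ℝ → ℝ}
    (h : GoodFn C f) {a : ℝ} (ha : 0 ≤ a) :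
    ξ (fun k => f (k : ℝ)) = ξ (fun k => ∫ t in ((k : ℝ) - 1)..(k : ℝ), f (t + a)) := by
  have hint : ∀ k : ℕ, 2 ≤ k → IntervalIntegrable (fun t => f (t + a)) MeasureTheory.volume
      ((k : ℝ) - 1) k := by
    intro k hk
    have hk' : (2 : ℝ) ≤ k := by exact_mod_cast hk
    have hu : Set.uIcc ((k : ℝ) - 1) k = Set.Icc ((k : ℝ) - 1) k := Set.uIcc_of_le (by linarith)
    have h1 : IntervalIntegrable (fun t => (t + a) * f (t + a)) MeasureTheory.volume
        ((k : ℝ) - 1) k := by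
      apply MonotoneOn.intervalIntegrable
      rw [hu]
      intro s hs t ht hst
      exact h.2 _ _ (by linarith [hs.1]) (by linarith)
    have h2 : ContinuousOn (fun t : ℝ => (t + a)⁻¹) (Set.uIcc ((k : ℝ) - 1) k) := by
      rw [hu]
      refine ContinuousOn.inv₀ (by fun_prop) fun t ht => ?_
      have : 0 < t + a := by linarith [ht.1]
      exact this.ne'
    refine (h1.mul_continuousOn h2).congr fun t ht => ?_
    rw [Set.uIoc_of_le (by linarith)] at ht
    have : 0 < t + a := by linarith [ht.1]
    field_simp
  have hIb : IsBddSeq (fun k : ℕ => ∫ t in ((k : ℝ) - 1)..(k : ℝ), f (t + a)) := by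
    refine bdd_of_shift (C := C) fun k => ?_
    have := intervalIntegral.norm_integral_le_of_norm_le_const (a := ((k + 1 : ℕ) : ℝ) - 1)
      (b := ((k + 1 : ℕ) : ℝ)) (f := fun t => f (t + a)) (C := C) (fun t ht => by
        rw [Set.uIoc_of_le (by linarith)] at ht
        have h1 := ht.1
        push_cast at h1
        have : (0 : ℝ) ≤ k := by positivity
        exact h.1 _ (by linarith))
    simpa using this
  apply le_antisymm
  · have hsh : ξ (fun k => f ((k - 1 : ℕ) : ℝ)) = ξ (fun k => f (k : ℝ)) := by
      rw [← hT _ (bdd_comp h.bdd' (fun k => k - 1))]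
      simp
    rw [← hsh, ← add_zero (ξ (fun k => ∫ t in ((k : ℝ) - 1)..(k : ℝ), f (t + a)))]
    refine state_le hst hT (bdd_comp h.bdd' (fun k => k - 1)) hIb
      (tendsto_err (C * (a + 1)) 1 1 one_pos) ?_
    filter_upwards [eventually_ge_atTop 2] with k hk
    have hk' : (2 : ℝ) ≤ k := by exact_mod_cast hk
    rw [← sub_le_iff_le_add, Nat.cast_sub (by omega)]
    have := intervalIntegral.integral_mono_on (a := (k : ℝ) - 1) (b := k) (by linarith)
      (intervalIntegrable_const
        (c := f ((k : ℝ) - (1 : ℕ)) - C * (a + 1) / (1 * (k : ℝ) - 1))) (hint k hk)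
      (fun t ht => by
        rw [sub_le_iff_le_add]
        refine h.bound (by linarith) ?_ ?_ ?_ <;> push_cast <;> linarith [ht.1, ht.2])
    simpa using this
  · obtain ⟨m, hm⟩ := exists_nat_ge a
    rw [← shift_n hT h.bdd' m, ← add_zero (ξ (fun k => f ((k + m : ℕ) : ℝ)))]
    refine state_le hst hT hIb (bdd_comp h.bdd' (fun k => k + m))
      (tendsto_err (C * (m + 1)) 1 1 one_pos) ?_
    filter_upwards [eventually_ge_atTop 2] with k hk
    have hk' : (2 : ℝ) ≤ k := by exact_mod_cast hk
    have := intervalIntegral.integral_mono_on (a := (k : ℝ) - 1) (b := k) (by linarith)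
      (hint k hk) (intervalIntegrable_const
        (c := f ((k + m : ℕ) : ℝ) + C * (m + 1) / (1 * (k : ℝ) - 1)))
      (fun t ht => by
        refine h.bound (by linarith) ?_ ?_ ?_ <;> push_cast <;> linarith [ht.1, ht.2])
    simpa using this

theorem scale_inv {ξ : (ℕ → ℝ) → ℝ} (hst : IsLinfState ξ) (hT : ShiftInv ξ) (hD : DilInv ξ)
    {C : ℝ} {f : ℝ → ℝ} (h : GoodFn C f) {j : ℕ} (hj : 0 < j) :
    ξ (fun k => f ((j : ℝ)⁻¹ * (k : ℝ))) = ξ (fun k => f (k : ℝ)) := by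
  have hj' : (0 : ℝ) < j := by exact_mod_cast hj
  have hji : (0 : ℝ) < (j : ℝ)⁻¹ := by positivity
  have hn : ∀ k : ℕ, (j : ℝ)⁻¹ * k ≤ ((k + j - 1) / j : ℕ) ∧
      (((k + j - 1) / j : ℕ) : ℝ) ≤ (j : ℝ)⁻¹ * k + 1 := by
    intro k
    have h1 := Nat.div_add_mod (k + j - 1) j
    have h2 := Nat.mod_lt (k + j - 1) hj
    set n := (k + j - 1) / j
    have h3 : k ≤ j * n := by omega
    have h4 : j * n ≤ k + j := by omega
    have h3' : (k : ℝ) ≤ j * n := by exact_mod_cast h3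
    have h4' : (j : ℝ) * n ≤ k + j := by exact_mod_cast h4
    constructor
    · rw [inv_mul_le_iff₀ hj']
      exact h3'
    · have : (n : ℝ) = (j : ℝ)⁻¹ * (j * n) := by field_simp
      rw [this]
      have h5 : (j : ℝ)⁻¹ * k + 1 = (j : ℝ)⁻¹ * (k + j) := by field_simp
      rw [h5]
      gcongr
  apply le_antisymm
  · rw [← hD j hj _ h.bdd', ← add_zero (ξ (fun k => f (((k + j - 1) / j : ℕ) : ℝ)))]
    refine state_le hst hT (h.bdd hji.le) (bdd_comp h.bdd' (fun k => (k + j - 1) / j))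
      (tendsto_err (C * 1) 0 _ hji) ?_
    filter_upwards [eventually_ge_atTop 1] with k hk
    have hk' : (1 : ℝ) ≤ k := by exact_mod_cast hk
    have := hn k
    exact h.bound (by rw [sub_zero]; positivity) (by simp) this.1 (by linarith [this.2])
  · have hb : IsBddSeq (fun k => f ((k - 1 : ℕ) : ℝ)) := bdd_comp h.bdd' (fun k => k - 1)
    have hsh : ξ (fun k => f ((k - 1 : ℕ) : ℝ)) = ξ (fun k => f (k : ℝ)) := by
      rw [← hT _ hb]
      simp
    rw [← hsh, ← hD j hj _ hb, ← add_zero (ξ (fun k => f ((j : ℝ)⁻¹ * (k : ℝ))))]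
    refine state_le hst hT (bdd_comp hb (fun k => (k + j - 1) / j)) (h.bdd hji.le)
      (tendsto_err (C * 1) 1 _ hji) ?_
    filter_upwards [eventually_gt_atTop j] with k hk
    have hk' : (j : ℝ) < k := by exact_mod_cast hk
    have h1 := hn k
    have h2 : 1 < (j : ℝ)⁻¹ * k := by
      rw [lt_inv_mul_iff₀ hj']
      linarith
    have h3 : 1 ≤ (k + j - 1) / j := by
      have : (1 : ℝ) < ((k + j - 1) / j : ℕ) := by linarith [h1.1]
      exact_mod_cast this.le
    refine h.bound (by linarith) ?_ ?_ ?_ <;> rw [Nat.cast_sub h3] <;> push_cast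
    · linarith [h1.1]
    · linarith [h1.2]
    · linarith [h1.1]

theorem scale_nat {ξ : (ℕ → ℝ) → ℝ} (hst : IsLinfState ξ) (hT : ShiftInv ξ) (hD : DilInv ξ)
    {C : ℝ} {f : ℝ → ℝ} (h : GoodFn C f) {j : ℕ} (hj : 0 < j) :
    ξ (fun k => f ((j : ℝ) * (k : ℝ))) = ξ (fun k => f (k : ℝ)) := by
  have hj' : (0 : ℝ) < j := by exact_mod_cast hj
  rw [← scale_inv hst hT hD (h.scale hj') hj]
  congr 1
  funext k
  congr 1
  field_simp

theorem scale_rat {ξ : (ℕ → ℝ) → ℝ} (hst : IsLinfState ξ) (hT : ShiftInv ξ) (hD : DilInv ξ)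
    {C : ℝ} {f : ℝ → ℝ} (h : GoodFn C f) {q : ℚ} (hq : 0 < q) :
    ξ (fun k => f ((q : ℝ) * (k : ℝ))) = ξ (fun k => f (k : ℝ)) := by
  obtain ⟨p, hp⟩ := Int.eq_ofNat_of_zero_le (Rat.num_pos.2 hq).le
  have hp0 : 0 < p := by
    have := Rat.num_pos.2 hq
    omega
  have hp' : (0 : ℝ) < p := by exact_mod_cast hp0
  have hd := q.den_pos
  have hqe : (q : ℝ) = p * (q.den : ℝ)⁻¹ := by
    rw [Rat.cast_def, hp, div_eq_mul_inv]
    simp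
  rw [← scale_nat hst hT hD h hp0, ← scale_inv hst hT hD (h.scale hp') hd]
  congr 1
  funext k
  congr 1
  rw [hqe, mul_assoc]

theorem scale_real {ξ : (ℕ → ℝ) → ℝ} (hst : IsLinfState ξ) (hT : ShiftInv ξ) (hD : DilInv ξ)
    {C : ℝ} {f : ℝ → ℝ} (h : GoodFn C f) {s : ℝ} (hs : 0 < s) :
    ξ (fun k => f (s * (k : ℝ))) = ξ (fun k => f (k : ℝ)) := by
  have hC := h.nonneg
  have key : ∀ u v d w : ℝ, 0 < w → w ≤ u → u ≤ v → v - u ≤ d →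
      ξ (fun k => f (u * (k : ℝ))) ≤ ξ (fun k => f (v * (k : ℝ))) + C * d / w := by
    intro u v d w hw hwu huv hd
    refine state_le hst hT (h.bdd (by linarith)) (h.bdd (by linarith)) tendsto_const_nhds ?_
    filter_upwards [eventually_ge_atTop 1] with k hk
    have hk' : (0 : ℝ) < k := by exact_mod_cast hk
    have := h.bound (s := u * k) (t := v * k) (u := w * k) (d := d * k) (by positivity)
      (by gcongr) (by gcongr) (by rw [← sub_mul]; gcongr)
    rwa [← mul_assoc, mul_div_mul_right _ _ hk'.ne'] at this
  have err : ∀ ε > 0, ∃ d > 0, d ≤ s / 2 ∧ C * d / (s / 2) ≤ ε := by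
    intro ε hε
    refine ⟨min (s / 2) (ε * (s / 2) / (C + 1)), by positivity, min_le_left _ _, ?_⟩
    rw [div_le_iff₀ (by positivity)]
    calc C * min (s / 2) (ε * (s / 2) / (C + 1)) ≤ (C + 1) * (ε * (s / 2) / (C + 1)) := by
          gcongr
          · linarith
          · exact min_le_right _ _
      _ = ε * (s / 2) := by field_simp
  apply le_antisymm
  · refine le_of_forall_pos_le_add fun ε hε => ?_
    obtain ⟨d, hd, hds, hde⟩ := err ε hε
    obtain ⟨q, hq1, hq2⟩ := exists_rat_btwn (show s < s + d by linarith)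
    have hq : 0 < q := by
      have : (0 : ℝ) < q := by linarith
      exact_mod_cast this
    have := key s q d (s / 2) (by positivity) (by linarith) hq1.le (by linarith)
    rw [scale_rat hst hT hD h hq] at this
    linarith
  · refine le_of_forall_pos_le_add fun ε hε => ?_
    obtain ⟨d, hd, hds, hde⟩ := err ε hε
    obtain ⟨q, hq1, hq2⟩ := exists_rat_btwn (show s - d < s by linarith)
    have hq : 0 < q := by
      have : (0 : ℝ) < q := by linarith
      exact_mod_cast this
    have := key q s d (s / 2) (by positivity) (by linarith) hq2.le (by linarith)
    rw [scale_rat hst hT hD h hq] at this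
    linarith

/-- for a state `ξ` on `ℓ^∞` invariant under the unit shift `T_1` and
under all dilations `D_j`, `j ∈ ℕ`, and every `a > 0`:
`ξ({f(k)}_k) = ξ({∫_{k−1}^{k} f(t+a) dt}_k)` and
`ξ({f(k)}_k) = ξ({∫_{k−1}^{k} f(t/a) dt}_k)`. -/
theorem shift_dilation_invariant_state_average_translate_dilate
    (ξ : (ℕ → ℝ) → ℝ) (hst : IsLinfState ξ) (hT : ShiftInv ξ) (hD : DilInv ξ)
    (f g : ℝ → ℝ) (hfb : ∃ C, ∀ t ≥ (0 : ℝ), |f t| ≤ C)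
    (hfg : ∀ t > (0 : ℝ), f t = g t / t) (hg : MonotoneOn g (Set.Ici 0))
    (a : ℝ) (ha : 0 < a) :
    ξ (fun k => f (k : ℝ)) = ξ (fun k => ∫ t in ((k : ℝ) - 1)..(k : ℝ), f (t + a)) ∧
    ξ (fun k => f (k : ℝ)) = ξ (fun k => ∫ t in ((k : ℝ) - 1)..(k : ℝ), f (t / a)) := by
  obtain ⟨C, hC⟩ := hfb
  have h : GoodFn C f := by
    refine ⟨hC, fun s t hs hst => ?_⟩
    have ht : 0 < t := hs.trans_le hst
    rw [hfg s hs, hfg t ht, mul_div_cancel₀ _ hs.ne', mul_div_cancel₀ _ ht.ne']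
    exact hg hs.le ht.le hst
  refine ⟨average hst hT h ha.le, ?_⟩
  have ha' : 0 < a⁻¹ := inv_pos.2 ha
  rw [← scale_real hst hT hD h ha', average hst hT (h.scale ha') le_rfl]
  simp only [add_zero, div_eq_inv_mul]
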